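/- The necessary bounding condition is not sufficient for deserializability: the layout [P 0 4, V, P 3 1, V] is valid and every position at which it has item V lies in the range of some pointer occurring in it, yet it is not deserializable. -/

import Mathlib

/-- A layout item: fixed-length field, variable-length field, or pointer `P o s`
with offset `o` and span `s`. -/
inductive Item : Type where
  | F : Item
  | V : Item
  | P : ℕ → ℕ → Item
deriving DecidableEq

/-- A layout is valid if every pointer `P o s` occurring in it satisfies
`o < |ℓ|` and `s ≤ |ℓ| - o`. -/
def ValidLayout (ℓ : List Item) : Prop :=
  ∀ o s : ℕ, Item.P o s ∈ ℓ → o < ℓ.length ∧ s ≤ ℓ.length - o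

/-- Facts the parser can know about positions of the layout. -/
inductive ParseFact : Type where
  | Beg : ℕ → ParseFact
  | Len : ℕ → ParseFact
  | Val : ℕ → ParseFact
deriving DecidableEq

/-- The smallest set of facts closed under the parser's inference rules. -/
inductive Derivable (ℓ : List Item) : ParseFact → Prop where
  | begin : Derivable ℓ (.Beg 0)
  | fieldF (i : ℕ) : ℓ[i]? = some .F → Derivable ℓ (.Len i)
  | fieldP (i o s : ℕ) : ℓ[i]? = some (.P o s) → Derivable ℓ (.Len i)
  | forwardVal (i : ℕ) : Derivable ℓ (.Beg i) → Derivable ℓ (.Len i) → Derivable ℓ (.Val i)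
  | forwardBeg (i : ℕ) : Derivable ℓ (.Beg i) → Derivable ℓ (.Len i) → Derivable ℓ (.Beg (i+1))
  | backwardBeg (i : ℕ) : Derivable ℓ (.Beg (i+1)) → Derivable ℓ (.Len i) → Derivable ℓ (.Beg i)
  | backwardVal (i : ℕ) : Derivable ℓ (.Beg (i+1)) → Derivable ℓ (.Len i) → Derivable ℓ (.Val i)
  | join (i : ℕ) : Derivable ℓ (.Beg i) → Derivable ℓ (.Beg (i+1)) → Derivable ℓ (.Len i)
  | jumpRight (i o s : ℕ) : ℓ[i]? = some (.P o s) → Derivable ℓ (.Val i) →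
      Derivable ℓ (.Beg o) → Derivable ℓ (.Beg (o+s))
  | jumpLeft (i o s : ℕ) : ℓ[i]? = some (.P o s) → Derivable ℓ (.Val i) →
      Derivable ℓ (.Beg (o+s)) → Derivable ℓ (.Beg o)

/-- A layout is deserializable if the length of every varfield is derivable. -/
def Deserializable (ℓ : List Item) : Prop :=
  ∀ j : ℕ, ℓ[j]? = some Item.V → Derivable ℓ (.Len j)

/-- A set `K` of boundaries (boundary `i` being the point where item `i` begins) that a parser
cannot leave: it contains the start of the message, items of known length do not cross between `K`
and its complement, and neither do pointers located at a boundary in `K`. -/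
structure ParserClosed (ℓ : List Item) (K : Set ℕ) : Prop where
  zero_mem : 0 ∈ K
  mem_iff_succ_mem {i : ℕ} {x : Item} : ℓ[i]? = some x → x ≠ .V → (i ∈ K ↔ i + 1 ∈ K)
  mem_iff_add_mem {i o s : ℕ} : ℓ[i]? = some (.P o s) → i ∈ K → (o ∈ K ↔ o + s ∈ K)

/-- What a fact says about a set `K` of boundaries when `Beg i` is read as `i ∈ K`. Knowing the
length of item `i` means being able to pass between its two ends, so `Len i` is read as an
equivalence; reading item `i`, that is `Val i`, requires having located it. -/
def ParseFact.HoldsIn (K : Set ℕ) : ParseFact → Prop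
  | .Beg i => i ∈ K
  | .Len i => i ∈ K ↔ i + 1 ∈ K
  | .Val i => i ∈ K

theorem Derivable.holdsIn {ℓ : List Item} {K : Set ℕ} (hK : ParserClosed ℓ K) {f : ParseFact}
    (hf : Derivable ℓ f) : f.HoldsIn K := by
  induction hf with
  | begin => exact hK.zero_mem
  | fieldF _ hi => exact hK.mem_iff_succ_mem hi nofun
  | fieldP _ _ _ hi => exact hK.mem_iff_succ_mem hi nofun
  | forwardVal _ _ _ beg _ => exact beg
  | forwardBeg _ _ _ beg len => exact len.mp beg
  | backwardBeg _ _ _ beg len => exact len.mpr beg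
  | backwardVal _ _ _ beg len => exact len.mpr beg
  | join _ _ _ beg beg_succ => exact iff_of_true beg beg_succ
  | jumpRight _ _ _ hi _ _ val beg => exact (hK.mem_iff_add_mem hi val).mp beg
  | jumpLeft _ _ _ hi _ _ val beg => exact (hK.mem_iff_add_mem hi val).mpr beg

theorem Deserializable.mem_of_parserClosed {ℓ : List Item} {K : Set ℕ} (hℓ : Deserializable ℓ)
    (hK : ParserClosed ℓ K) {i : ℕ} (hi : i ≤ ℓ.length) : i ∈ K := by
  induction i with
  | zero => exact hK.zero_mem
  | succ i ih =>
    have item_eq : ℓ[i]? = some ℓ[i] := List.getElem?_eq_getElem hi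
    have mem_iff : i ∈ K ↔ i + 1 ∈ K := by
      by_cases isV : ℓ[i] = .V
      · exact (hℓ i (item_eq.trans (congrArg some isV))).holdsIn hK
      · exact hK.mem_iff_succ_mem item_eq isV
    exact mem_iff.mp (ih (Nat.le_of_succ_le hi))

-- The pointer `P 3 1` is no help: it begins at boundary 2, itself hidden behind the varfield at 1.
theorem parserClosed_zero_one_four :
    ParserClosed [Item.P 0 4, Item.V, Item.P 3 1, Item.V] {0, 1, 4} where
  zero_mem := by simp
  mem_iff_succ_mem {i x} hi hx := by
    rcases i with _ | _ | _ | _ | i <;> simp_all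
  mem_iff_add_mem {i o s} hi hmem := by
    obtain rfl | rfl | rfl := hmem <;> simp_all

/-- The necessary bounding condition is not sufficient: `[P 0 4, V, P 3 1, V]` is
valid and every varfield position lies in the range of some pointer of the
layout, yet the layout is not deserializable. -/
theorem bounding_not_sufficient :
    ValidLayout [Item.P 0 4, Item.V, Item.P 3 1, Item.V] ∧
    (∀ j : ℕ, [Item.P 0 4, Item.V, Item.P 3 1, Item.V][j]? = some Item.V →
      ∃ p o s : ℕ, [Item.P 0 4, Item.V, Item.P 3 1, Item.V][p]? = some (Item.P o s) ∧
        o ≤ j ∧ j < o + s) ∧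
    ¬ Deserializable [Item.P 0 4, Item.V, Item.P 3 1, Item.V] := by
  refine ⟨?valid, ?bounded, ?stuck⟩
  case valid =>
    intro o s hmem
    have pointer_eq : o = 0 ∧ s = 4 ∨ o = 3 ∧ s = 1 := by simpa using hmem
    obtain ⟨rfl, rfl⟩ | ⟨rfl, rfl⟩ := pointer_eq <;> simp
  case bounded =>
    intro j hj
    have j_lt_four : j < 4 := (List.getElem?_eq_some_iff.mp hj).1
    exact ⟨0, 0, 4, rfl, j.zero_le, j_lt_four⟩
  case stuck =>
    intro hdes
    have two_mem : 2 ∈ ({0, 1, 4} : Set ℕ) :=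
      hdes.mem_of_parserClosed parserClosed_zero_one_four (by simp)
    simp at two_mem
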